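/- Every essentially incomplete theory is f-uniformly essentially incomplete: if U is essentially incomplete, then for every k ∈ ℕ and all consistent c.e. extensions U_0, …, U_{k−1} of U in the same signature, there exists a single sentence that is independent of each of U_0, …, U_{k−1}. -/

import Mathlib

open FirstOrder FirstOrder.Language

namespace PourEl

/-! ## Recursion-theoretic notions -/

/-- The `i`-th computably enumerable subset of `ℕ` (the domain of the `i`-th
partial computable function). -/
def WSet (i : ℕ) : Set ℕ :=
  {n | ((Denumerable.ofNat Nat.Partrec.Code i).eval n).Dom}

/-- A set of natural numbers is computably enumerable. -/
def CE (A : Set ℕ) : Prop := ∃ i, A = WSet i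

/-- A set of natural numbers is computable. -/
def Comp (A : Set ℕ) : Prop := ComputablePred (· ∈ A)

/-- Disjoint sets `X`, `Y` are computably separable iff some computable set
contains `X` and is disjoint from `Y`. -/
def CompSeparable (X Y : Set ℕ) : Prop :=
  ∃ Z : Set ℕ, Comp Z ∧ X ⊆ Z ∧ Y ∩ Z = ∅

/-- Computable inseparability. -/
def CompInseparable (X Y : Set ℕ) : Prop := ¬ CompSeparable X Y

/-- `Z` and `W` weakly biseparate `X` and `Y`. -/
def WeaklyBiseparate {α : Type*} (Z W X Y : Set α) : Prop :=
  X ⊆ Z ∧ Y ⊆ W ∧ Z ∩ Y = ∅ ∧ W ∩ X = ∅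

/-- `Z` and `W` biseparate `X` and `Y`. -/
def Biseparate {α : Type*} (Z W X Y : Set α) : Prop :=
  WeaklyBiseparate Z W X Y ∧ Z ∩ W = ∅

/-! ## Logical notions -/

variable {L : FirstOrder.Language}

/-- Provability: `φ` is a first-order consequence of `U` (by Gödel completeness,
semantic consequence). -/
def Prv (U : L.Theory) (φ : L.Sentence) : Prop := U ⊨ᵇ φ

/-- `U_p`: the set of theorems of `U`. -/
def Thms (U : L.Theory) : Set L.Sentence := {φ | Prv U φ}

/-- `U_r`: the set of refutable sentences of `U`. -/
def Refut (U : L.Theory) : Set L.Sentence := {φ | Prv U ∼φ}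

/-- Consistency: `U ⊬ ⊥`. -/
def Consistent (U : L.Theory) : Prop := ¬ Prv U ⊥

/-- `φ` is independent of `U`: `U` proves neither `φ` nor `¬φ`. -/
def Independent (U : L.Theory) (φ : L.Sentence) : Prop := ¬ Prv U φ ∧ ¬ Prv U ∼φ

/-- `U` is incomplete: some sentence is independent of it. -/
def Incomplete (U : L.Theory) : Prop := ∃ φ, Independent U φ

/-- Mono-consequence: `U ⊢_m φ` iff `ψ ⊢ φ` for some `ψ ∈ U`. -/
def MPrv (U : L.Theory) (φ : L.Sentence) : Prop := ∃ ψ ∈ U, Prv {ψ} φ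

/-- `U_m`: the set of mono-theorems of `U`. -/
def MThms (U : L.Theory) : Set L.Sentence := {φ | MPrv U φ}

/-- `U_n`: the set of mono-refutable sentences of `U`. -/
def MRefut (U : L.Theory) : Set L.Sentence := {φ | MPrv U ∼φ}

/-- Mono-consistency: every member is consistent by itself. -/
def MonoConsistent (U : L.Theory) : Prop := ∀ ψ ∈ U, Consistent ({ψ} : L.Theory)

/-- `Û`: the set of all non-empty finite conjunctions of elements of `U`. -/
def hat (U : L.Theory) : L.Theory :=
  {φ | ∃ (ψ : L.Sentence) (l : List L.Sentence),
    ψ ∈ U ∧ (∀ χ ∈ l, χ ∈ U) ∧ φ = l.foldl (· ⊓ ·) ψ}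

/-- `U ⋓ V`. -/
def Cup (U V : L.Theory) : L.Theory :=
  {χ | ∃ φ ∈ U, ∃ ψ ∈ V, χ = φ ⊓ ψ}

/-- `U ⋐ V`: for every `φ ∈ U` and `ψ ∈ V` there is `ρ ∈ V` with `ρ ⊢ φ ∧ ψ`. -/
def Ssub (U V : L.Theory) : Prop :=
  ∀ φ ∈ U, ∀ ψ ∈ V, ∃ ρ ∈ V, Prv {ρ} (φ ⊓ ψ)

/-! ## Gödel numbering -/

/-- A Gödel numbering of the sentences of a (countable) signature: a bijective
coding of sentences by natural numbers that is effective for the basic syntactic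
operations, and for which the theorems of a c.e. theory can be effectively
enumerated from an index of the theory. -/
structure Numbering (L : FirstOrder.Language) where
  equiv : L.Sentence ≃ ℕ
  neg_comp : Computable fun n => equiv ∼(equiv.symm n)
  inf_comp : Computable₂ fun m n => equiv (equiv.symm m ⊓ equiv.symm n)
  imp_comp : Computable₂ fun m n => equiv (equiv.symm m ⟹ equiv.symm n)
  iff_comp : Computable₂ fun m n => equiv (equiv.symm m ⇔ equiv.symm n)
  thmIdx : ℕ → ℕ
  thmIdx_comp : Computable thmIdx
  thmIdx_spec : ∀ i, WSet (thmIdx i) = equiv '' Thms (equiv.symm '' WSet i)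

namespace Numbering

variable (g : Numbering L)

/-- The code of a sentence. -/
def code (φ : L.Sentence) : ℕ := g.equiv φ

/-- The set of codes of a set of sentences. -/
def codes (S : Set L.Sentence) : Set ℕ := g.equiv '' S

/-- The theory axiomatised by the `i`-th c.e. set (identified with a set of
sentences via the numbering). -/
def thy (i : ℕ) : L.Theory := g.equiv.symm '' WSet i

/-- The theory `U` is computably enumerable (with respect to the numbering). -/
def CEThy (U : L.Theory) : Prop := CE (g.codes U)

end Numbering

/-!
Two jointly consistent c.e. extensions of `U` can be merged into their union, which is again a
c.e. extension of `U`, and independence passes from the union down to both parts. A cover of the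
given theories by such extensions that uses as few of them as possible is therefore pairwise
jointly inconsistent. By compactness each member `S i` of this cover proves a sentence `χ i` that
all the other members refute. If `ψ i` is independent of `S i`, then `⋁ i, χ i ⊓ ψ i` is equivalent
to `ψ i` over `S i`, so this single sentence is independent of every `S i`.
-/

theorem Prv.mono {S T : L.Theory} (hST : S ⊆ T) {φ : L.Sentence} (h : Prv S φ) : Prv T φ :=
  Theory.models_of_models_theory (fun _ hψ => Theory.models_sentence_of_mem (hST hψ)) h

theorem Thms.mono {S T : L.Theory} (hST : S ⊆ T) : Thms S ⊆ Thms T :=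
  fun _ => Prv.mono hST

theorem Independent.anti {S T : L.Theory} (hST : S ⊆ T) {φ : L.Sentence} (h : Independent T φ) :
    Independent S φ :=
  ⟨fun hφ => h.1 (hφ.mono hST), fun hφ => h.2 (hφ.mono hST)⟩

theorem Independent.congr {S : L.Theory} {φ ψ : L.Sentence} (hφψ : φ ⇔[S] ψ)
    (h : Independent S φ) : Independent S ψ := by
  refine ⟨fun hψ => h.1 ?_, fun hψ => h.2 ?_⟩
  · exact Theory.models_sentence_iff.2 fun M =>
      hφψ.models_sentence_iff.2 (Theory.models_sentence_iff.1 hψ M)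
  · exact Theory.models_sentence_iff.2 fun M =>
      hφψ.not.models_sentence_iff.2 (Theory.models_sentence_iff.1 hψ M)

theorem exists_prv_and_prv_not {S T : L.Theory} (h : ¬ Consistent (S ∪ T)) :
    ∃ χ : L.Sentence, Prv S χ ∧ Prv T ∼χ := by
  classical
  obtain ⟨F, hFST, hF⟩ := Theory.models_iff_finset_models.1 (not_not.1 h)
  let conjuncts : {φ // φ ∈ F.filter (· ∈ S)} → L.Sentence := Subtype.val
  refine ⟨BoundedFormula.iInf conjuncts, Theory.models_sentence_iff.2 fun M => ?_,
    Theory.models_sentence_iff.2 fun M => BoundedFormula.realize_not.2 fun hM => ?_⟩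
  · exact BoundedFormula.realize_iInf.2 fun φ =>
      Theory.realize_sentence_of_mem S (Finset.mem_filter.1 φ.2).2
  · have hMF : M ⊨ (F : L.Theory) := by
      refine ⟨fun φ hφ => ?_⟩
      rcases hFST hφ with hφS | hφT
      · exact BoundedFormula.realize_iInf.1 hM ⟨φ, Finset.mem_filter.2 ⟨hφ, hφS⟩⟩
      · exact Theory.realize_sentence_of_mem T hφT
    exact hF.realize_sentence M

theorem exists_prv_and_forall_prv_not {ι : Type*} [Finite ι] {S : L.Theory} {T : ι → L.Theory}
    (h : ∀ i, ¬ Consistent (S ∪ T i)) : ∃ χ : L.Sentence, Prv S χ ∧ ∀ i, Prv (T i) ∼χ := by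
  choose χ hS hT using fun i => exists_prv_and_prv_not (h i)
  refine ⟨BoundedFormula.iInf χ, Theory.models_sentence_iff.2 fun M => ?_,
    fun i => Theory.models_sentence_iff.2 fun M => BoundedFormula.realize_not.2 fun hM => ?_⟩
  · exact BoundedFormula.realize_iInf.2 fun i => Theory.models_sentence_iff.1 (hS i) M
  · exact BoundedFormula.realize_not.1 (Theory.models_sentence_iff.1 (hT i) M)
      (BoundedFormula.realize_iInf.1 hM i)

theorem iff_iSup_inf_of_prv {ι : Type*} [Finite ι] {S : L.Theory} {χ ψ : ι → L.Sentence} {i : ι}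
    (hi : Prv S (χ i)) (hne : ∀ j, j ≠ i → Prv S ∼(χ j)) :
    ψ i ⇔[S] BoundedFormula.iSup fun j => χ j ⊓ ψ j := by
  intro M v xs
  simp only [BoundedFormula.realize_iff, BoundedFormula.realize_iSup, BoundedFormula.realize_inf]
  refine ⟨fun hψ => ⟨i, hi M v xs, hψ⟩, ?_⟩
  rintro ⟨j, hχ, hψ⟩
  obtain rfl : j = i := by_contra fun hji => BoundedFormula.realize_not.1 (hne j hji M v xs) hχ
  exact hψ

theorem exists_forall_independent_of_pairwise_not_consistent {ι : Type*} [Finite ι]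
    {S : ι → L.Theory} (hinc : ∀ i, Incomplete (S i))
    (hpair : Pairwise fun i j => ¬ Consistent (S i ∪ S j)) :
    ∃ φ : L.Sentence, ∀ i, Independent (S i) φ := by
  choose ψ hψ using hinc
  have hsep (i : ι) : ∃ χ : L.Sentence, Prv (S i) χ ∧ ∀ j : {j // j ≠ i}, Prv (S j) ∼χ :=
    exists_prv_and_forall_prv_not fun j => hpair j.2.symm
  choose χ hχ hχ_not using hsep
  exact ⟨BoundedFormula.iSup fun j => χ j ⊓ ψ j, fun i =>
    (hψ i).congr (iff_iSup_inf_of_prv (hχ i) fun j hji => hχ_not j ⟨i, hji.symm⟩)⟩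

theorem exists_finset_cover_pairwise_sup_notMem {α ι : Type*} [SemilatticeSup α] [Finite ι]
    {C : Set α} {f : ι → α} (hf : ∀ i, f i ∈ C) :
    ∃ G : Finset α, (∀ a ∈ G, a ∈ C) ∧ (G : Set α).Pairwise (fun a b => a ⊔ b ∉ C) ∧
      ∀ i, ∃ a ∈ G, f i ≤ a := by
  classical
  let IsCover (G : Finset α) : Prop := (∀ a ∈ G, a ∈ C) ∧ ∀ i, ∃ a ∈ G, f i ≤ a
  have hrange : IsCover (Set.finite_range f).toFinset := by
    simp only [IsCover, Set.Finite.mem_toFinset, Set.forall_mem_range, Set.exists_range_iff]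
    exact ⟨hf, fun i => ⟨i, le_rfl⟩⟩
  obtain ⟨G, ⟨hGC, hGf⟩, hmin⟩ :=
    exists_minimalFor_of_wellFoundedLT IsCover Finset.card ⟨_, hrange⟩
  refine ⟨G, hGC, fun a ha b hb hab hsup => ?_, hGf⟩
  let G' := insert (a ⊔ b) ((G.erase a).erase b)
  have hcover : IsCover G' := by
    refine ⟨fun c hc => ?_, fun i => ?_⟩
    · grind
    · obtain ⟨c, hc, hic⟩ := hGf i
      by_cases hcab : c = a ∨ c = b
      · refine ⟨a ⊔ b, Finset.mem_insert_self _ _, hic.trans ?_⟩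
        rcases hcab with rfl | rfl
        exacts [le_sup_left, le_sup_right]
      · exact ⟨c, by grind, hic⟩
  have hcard : G'.card < G.card := by
    have hb' : b ∈ G.erase a := Finset.mem_erase.2 ⟨hab.symm, hb⟩
    have := Finset.card_erase_add_one ha
    have := Finset.card_erase_add_one hb'
    have := Finset.card_insert_le (a ⊔ b) ((G.erase a).erase b)
    lia
  exact hcard.not_ge (hmin hcover hcard.le)

theorem CE.union {A B : Set ℕ} (hA : CE A) (hB : CE B) : CE (A ∪ B) := by
  obtain ⟨i, rfl⟩ := hA
  obtain ⟨j, rfl⟩ := hB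
  obtain ⟨f, hf, hmerge⟩ := Nat.Partrec.merge' (Nat.Partrec.Code.exists_code.2 ⟨_, rfl⟩)
    (Nat.Partrec.Code.exists_code.2 ⟨_, rfl⟩)
  obtain ⟨c, rfl⟩ := Nat.Partrec.Code.exists_code.1 hf
  refine ⟨Encodable.encode c, Set.ext fun n => ?_⟩
  simpa only [WSet, Set.mem_union, Set.mem_ofPred_eq, Denumerable.ofNat_encode] using
    (hmerge n).2.symm

theorem Numbering.CEThy.union {g : Numbering L} {S T : L.Theory} (hS : g.CEThy S)
    (hT : g.CEThy T) : g.CEThy (S ∪ T) := by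
  simpa only [Numbering.CEThy, Numbering.codes, Set.image_union] using CE.union hS hT

theorem statement4_general {P : L.Theory → Prop} (hP : ∀ {S T : L.Theory}, P S → P T → P (S ∪ T))
    (U : L.Theory) (hEI : ∀ V, P V → Consistent V → Thms U ⊆ Thms V → Incomplete V)
    {ι : Type*} [Finite ι] (T : ι → L.Theory)
    (hT : ∀ i, P (T i) ∧ Consistent (T i) ∧ Thms U ⊆ Thms (T i)) :
    ∃ φ : L.Sentence, ∀ i, Independent (T i) φ := by
  let C : Set L.Theory := {V | P V ∧ Consistent V ∧ Thms U ⊆ Thms V}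
  obtain ⟨G, hGC, hpair, hcover⟩ := exists_finset_cover_pairwise_sup_notMem (C := C) hT
  have hinc (S : G) : Incomplete S.1 :=
    let ⟨hPS, hSc, hUS⟩ := hGC S S.2
    hEI S hPS hSc hUS
  have hincons : Pairwise fun S S' : G => ¬ Consistent (S.1 ∪ S'.1) := by
    intro S S' hne hc
    obtain ⟨hPS, -, hUS⟩ := hGC S S.2
    exact hpair S.2 S'.2 (Subtype.coe_ne_coe.2 hne)
      ⟨hP hPS (hGC S' S'.2).1, hc, hUS.trans (Thms.mono Set.subset_union_left)⟩
  obtain ⟨φ, hφ⟩ := exists_forall_independent_of_pairwise_not_consistent hinc hincons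
  refine ⟨φ, fun i => ?_⟩
  obtain ⟨S, hSG, hTS⟩ := hcover i
  exact (hφ ⟨S, hSG⟩).anti hTS

/-- Every essentially incomplete theory is f-uniformly
essentially incomplete: given finitely many consistent c.e. extensions
`T 0, …, T (k-1)` of `U` in the same signature, some single sentence is
independent of all of them. -/
theorem statement4 {L : FirstOrder.Language} (g : Numbering L) (U : L.Theory)
    (hEI : ∀ V : L.Theory, g.CEThy V → Consistent V → Thms U ⊆ Thms V → Incomplete V)
    (k : ℕ) (T : Fin k → L.Theory)
    (hT : ∀ m, g.CEThy (T m) ∧ Consistent (T m) ∧ Thms U ⊆ Thms (T m)) :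
    ∃ φ : L.Sentence, ∀ m, Independent (T m) φ :=
  statement4_general Numbering.CEThy.union U hEI T hT

end PourEl
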